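/- arXiv:2507.05732 — 2 statements merged into one kernel-verified Lean document; each statement's English description precedes it below -/
import Mathlib

section
/- Let G_1, G_2 be coprime homogeneous polynomials of degree d in κ[x_0,x_1,x_2] and let X ⊆ V(G_1,G_2) be a subscheme of length at most 3d−1. Then X imposes independent conditions on degree-d forms, i.e., dim I_d(X) = binom(d+2,2) − length(X). -/
open MvPolynomial

/-- The degree-`k` graded piece `I_k` of an ideal `I` of `κ[x_0,x_1,x_2]`, as a
`κ`-subspace. -/
noncomputable def gradedIdealPiece (κ : Type*) [Field κ]
    (I : Ideal (MvPolynomial (Fin 3) κ)) (k : ℕ) :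
    Submodule κ (MvPolynomial (Fin 3) κ) :=
  Submodule.restrictScalars κ I ⊓ MvPolynomial.homogeneousSubmodule (Fin 3) κ k

section Univariate

open Polynomial (degreeLT)

variable {κ : Type*} [Field κ]

theorem finrank_map_mulLeft {g : Polynomial κ} (hg : g ≠ 0) (V : Submodule κ (Polynomial κ)) :
    Module.finrank κ (V.map (LinearMap.mulLeft κ g)) = Module.finrank κ V :=
  (Submodule.equivMapOfInjective _ (mul_right_injective₀ hg) V).finrank_eq.symm

theorem finrank_degreeLT (n : ℕ) : Module.finrank κ (degreeLT κ n) = n := by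
  rw [(Polynomial.degreeLTEquiv κ n).finrank_eq, Module.finrank_fin_fun]

theorem eq_bot_of_le_map_mulLeft_X {V : Submodule κ (Polynomial κ)}
    (h : V ≤ V.map (LinearMap.mulLeft κ Polynomial.X)) : V = ⊥ := by
  have key : ∀ n : ℕ, ∀ v ∈ V, (Polynomial.X : Polynomial κ) ^ n ∣ v := by
    intro n
    induction n with
    | zero => simp
    | succ n ih =>
      intro v hv
      obtain ⟨w, hw, rfl⟩ := h hv
      rw [LinearMap.mulLeft_apply, pow_succ']
      exact mul_dvd_mul_left _ (ih w hw)
  refine (Submodule.eq_bot_iff _).2 fun v hv => ?_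
  refine Polynomial.eq_zero_of_dvd_of_natDegree_lt (key (v.natDegree + 1) v hv) ?_
  simp

theorem finrank_sup_add_finrank_inf_comap (V : Submodule κ (Polynomial κ))
    [FiniteDimensional κ V] :
    Module.finrank κ (V ⊔ V.map (LinearMap.mulLeft κ Polynomial.X) :
        Submodule κ (Polynomial κ)) +
      Module.finrank κ (V ⊓ V.comap (LinearMap.mulLeft κ Polynomial.X) :
        Submodule κ (Polynomial κ)) = 2 * Module.finrank κ V := by
  rw [← finrank_map_mulLeft Polynomial.X_ne_zero (V ⊓ _), ← Submodule.map_inf_eq_map_inf_comap,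
    inf_comm, Submodule.finrank_sup_add_finrank_inf_eq,
    finrank_map_mulLeft Polynomial.X_ne_zero, two_mul]

theorem finrank_inf_comap_lt {V : Submodule κ (Polynomial κ)} [FiniteDimensional κ V]
    (hV : V ≠ ⊥) :
    Module.finrank κ (V ⊓ V.comap (LinearMap.mulLeft κ Polynomial.X) :
      Submodule κ (Polynomial κ)) < Module.finrank κ V := by
  rw [← finrank_map_mulLeft Polynomial.X_ne_zero (V ⊓ _), ← Submodule.map_inf_eq_map_inf_comap]
  refine Submodule.finrank_lt_finrank_of_lt (lt_of_le_of_ne inf_le_right fun h => hV ?_)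
  exact eq_bot_of_le_map_mulLeft_X (inf_eq_right.1 h)

theorem finrank_add_one_le {V W : Submodule κ (Polynomial κ)} [FiniteDimensional κ W]
    (hV : V ≠ ⊥) (h₁ : V ≤ W) (h₂ : V.map (LinearMap.mulLeft κ Polynomial.X) ≤ W) :
    Module.finrank κ V + 1 ≤ Module.finrank κ W := by
  have : FiniteDimensional κ V := Submodule.finiteDimensional_of_le h₁
  have := finrank_sup_add_finrank_inf_comap V
  have := finrank_inf_comap_lt hV
  have := Submodule.finrank_mono (sup_le h₁ h₂)
  omega

theorem map_mulLeft_degreeLT_succ_le {V W : Submodule κ (Polynomial κ)} {g : Polynomial κ} {n : ℕ}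
    (hn : n ≠ 0) (hV : V = (degreeLT κ n).map (LinearMap.mulLeft κ g)) (h₁ : V ≤ W)
    (h₂ : V.map (LinearMap.mulLeft κ Polynomial.X) ≤ W) :
    (degreeLT κ (n + 1)).map (LinearMap.mulLeft κ g) ≤ W := by
  classical
  obtain ⟨m, rfl⟩ := Nat.exists_eq_succ_of_ne_zero hn
  rw [Polynomial.degreeLT_eq_span_X_pow, Submodule.map_span, Submodule.span_le]
  rintro _ ⟨_, hp, rfl⟩
  obtain ⟨i, hi, rfl⟩ := Finset.mem_image.1 hp
  have hmem : ∀ j < m + 1, g * Polynomial.X ^ j ∈ V := by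
    intro j hj
    rw [hV]
    refine ⟨Polynomial.X ^ j, ?_, rfl⟩
    rw [SetLike.mem_coe, Polynomial.mem_degreeLT, Polynomial.degree_X_pow]
    exact_mod_cast hj
  rw [Finset.mem_range] at hi
  rcases Nat.lt_or_ge i (m + 1) with h | h
  · exact h₁ (hmem i h)
  · obtain rfl : i = m + 1 := by omega
    refine h₂ ⟨_, hmem m (by omega), ?_⟩
    simp only [LinearMap.mulLeft_apply]
    ring

/-- A space of polynomials that grows by only one dimension under multiplication by `⟨1, X⟩`
consists of all multiples of bounded degree of a single polynomial. -/
theorem exists_eq_map_mulLeft_degreeLT {V W : Submodule κ (Polynomial κ)} [FiniteDimensional κ W]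
    (h₁ : V ≤ W) (h₂ : V.map (LinearMap.mulLeft κ Polynomial.X) ≤ W)
    (h : Module.finrank κ W ≤ Module.finrank κ V + 1) :
    ∃ g ≠ 0, V = (degreeLT κ (Module.finrank κ V)).map (LinearMap.mulLeft κ g) := by
  classical
  induction hn : Module.finrank κ V generalizing V W with
  | zero =>
    have : FiniteDimensional κ V := Submodule.finiteDimensional_of_le h₁
    refine ⟨1, one_ne_zero, ?_⟩
    rw [Submodule.finrank_eq_zero.1 hn]
    symm
    rw [← Submodule.finrank_eq_zero (R := κ), finrank_map_mulLeft one_ne_zero, finrank_degreeLT]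
  | succ n ih =>
    have : FiniteDimensional κ V := Submodule.finiteDimensional_of_le h₁
    have hV : V ≠ ⊥ := by rintro rfl; simp at hn
    have hsum := finrank_sup_add_finrank_inf_comap V
    have hlt := finrank_inf_comap_lt hV
    have hle := Submodule.finrank_mono (sup_le h₁ h₂)
    obtain ⟨g, hg, hgV⟩ := ih (V := V ⊓ V.comap (LinearMap.mulLeft κ Polynomial.X)) (W := V)
      inf_le_left (Submodule.map_le_iff_le_comap.2 inf_le_right) (by omega) (by omega)
    rcases eq_or_ne n 0 with rfl | hn0
    · obtain ⟨v, hv, hvV⟩ := finrank_eq_one_iff'.1 hn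
      refine ⟨v, by simpa using hv, ?_⟩
      symm
      refine Submodule.eq_of_le_of_finrank_eq ?_ ?_
      · rw [Polynomial.degreeLT_eq_span_X_pow, Submodule.map_span, Submodule.span_le]
        simp
      · rw [finrank_map_mulLeft (by simpa using hv), finrank_degreeLT, hn]
    · refine ⟨g, hg, ?_⟩
      symm
      refine Submodule.eq_of_le_of_finrank_eq (map_mulLeft_degreeLT_succ_le hn0 hgV inf_le_left
        (Submodule.map_le_iff_le_comap.2 inf_le_right)) ?_
      rw [finrank_map_mulLeft hg, finrank_degreeLT, hn]

theorem lt_of_mem_map_mulLeft_degreeLT {g p q r : Polynomial κ} {n : ℕ} (hpq : IsCoprime p q)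
    (hp : p ∈ (degreeLT κ n).map (LinearMap.mulLeft κ g))
    (hq : q ∈ (degreeLT κ n).map (LinearMap.mulLeft κ g))
    (hr : r ∈ (degreeLT κ n).map (LinearMap.mulLeft κ g)) (hr0 : r ≠ 0) :
    r.natDegree < n := by
  obtain ⟨p', -, rfl⟩ := hp
  obtain ⟨q', -, rfl⟩ := hq
  obtain ⟨r', hr', rfl⟩ := hr
  have hg : IsUnit g := hpq.isUnit_of_dvd' (Dvd.intro _ rfl) (Dvd.intro _ rfl)
  have hr'0 : r' ≠ 0 := by rintro rfl; simp at hr0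
  rw [LinearMap.mulLeft_apply, Polynomial.natDegree_mul hg.ne_zero hr'0,
    Polynomial.natDegree_eq_zero_of_isUnit hg, zero_add]
  exact (Polynomial.natDegree_lt_iff_degree_lt hr'0).2 (Polynomial.mem_degreeLT.1 hr')

/-- Dimension bounds for a graded family of spaces of polynomials, that is, for a homogeneous
ideal of binary forms, containing two coprime elements in degree `d` but not everything in
degree `d + 1`. -/
theorem finrank_le_of_isCoprime {V : ℕ → Submodule κ (Polynomial κ)} {e : ℕ}
    (hV : ∀ k, V k ≤ degreeLT κ (k + 1)) (h₁ : ∀ k, V k ≤ V (k + 1))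
    (h₂ : ∀ k, (V k).map (LinearMap.mulLeft κ Polynomial.X) ≤ V (k + 1))
    {p q r : Polynomial κ} (hpq : IsCoprime p q) (hp : p ∈ V (e + 1)) (hq : q ∈ V (e + 1))
    (hr : r ∈ V (e + 1)) (hr0 : r ≠ 0) (hdeg : r.natDegree = e + 1)
    (hdim : Module.finrank κ (V (e + 1 + 1)) ≤ e + 2) :
    Module.finrank κ (V (e + 1)) ≤ e ∧ ∀ k ≤ e, Module.finrank κ (V k) ≤ k - 2 := by
  have hfin : ∀ k, FiniteDimensional κ (V k) := fun k => Submodule.finiteDimensional_of_le (hV k)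
  have hne : V (e + 1) ≠ ⊥ := fun h => hr0 (by simpa [h] using hr)
  have htop : Module.finrank κ (V (e + 1)) ≤ e := by
    have hstep := finrank_add_one_le hne (h₁ _) (h₂ _)
    by_contra hcon
    obtain ⟨g, hg, hgV⟩ := exists_eq_map_mulLeft_degreeLT (h₁ (e + 1)) (h₂ (e + 1)) (by omega)
    have := lt_of_mem_map_mulLeft_degreeLT hpq (hgV ▸ hp) (hgV ▸ hq) (hgV ▸ hr) hr0
    omega
  refine ⟨htop, ?_⟩
  have hmid : V e ≠ ⊥ → Module.finrank κ (V e) + 2 ≤ e := by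
    intro hbot
    have hstep := finrank_add_one_le hbot (h₁ _) (h₂ _)
    by_contra hcon
    obtain ⟨g, hg, hgV⟩ := exists_eq_map_mulLeft_degreeLT (h₁ e) (h₂ e) (by omega)
    have hle := map_mulLeft_degreeLT_succ_le (fun h => hbot (Submodule.finrank_eq_zero.1 h)) hgV
      (h₁ e) (h₂ e)
    have heq := Submodule.eq_of_le_of_finrank_le hle
      (by rw [finrank_map_mulLeft hg, finrank_degreeLT]; omega)
    have := lt_of_mem_map_mulLeft_degreeLT hpq (heq ▸ hp) (heq ▸ hq) (heq ▸ hr) hr0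
    omega
  have hlow : ∀ j k, k + j = e → V k ≠ ⊥ → Module.finrank κ (V k) + 2 ≤ k := by
    intro j
    induction j with
    | zero => rintro k rfl; exact hmid
    | succ j ih =>
      intro k hk hbot
      have := ih (k + 1) (by omega) fun h => hbot (eq_bot_iff.2 (h ▸ h₁ k))
      have := finrank_add_one_le hbot (h₁ k) (h₂ k)
      omega
  intro k hk
  rcases eq_or_ne (V k) ⊥ with h | h
  · rw [h, finrank_bot]
    exact Nat.zero_le _
  · have := hlow (e - k) k (by omega) h
    omega

end Univariate

section Elimination

theorem isCoprime_map_of_isRelPrime {R : Type*} [CommRing R] [IsDomain R]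
    [UniqueFactorizationMonoid R] (K : Type*) [Field K] [Algebra R K] [IsFractionRing R K]
    {p q : Polynomial R} (h : IsRelPrime p q) (h0 : p ≠ 0) :
    IsCoprime (p.map (algebraMap R K)) (q.map (algebraMap R K)) := by
  have : NormalizedGCDMonoid R := Nonempty.some inferInstance
  have hinj := Polynomial.map_injective _ (IsFractionRing.injective R K)
  refine isCoprime_of_dvd _ _ (fun h' => h0 (hinj (by simpa using h'.1))) ?_
  intro z hz hz0 hzp hzq
  obtain ⟨c, hc, hcz⟩ := IsLocalization.integerNormalization_spec (nonZeroDivisors R) z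
  set w := IsLocalization.integerNormalization (nonZeroDivisors R) z with hw
  have hdvd : w.primPart.map (algebraMap R K) ∣ z := by
    have hc' : IsUnit (Polynomial.C (algebraMap R K c)) :=
      Polynomial.isUnit_C.2 (IsUnit.mk0 _ (IsFractionRing.to_map_ne_zero_of_mem_nonZeroDivisors hc))
    have : w.primPart.map (algebraMap R K) ∣ Polynomial.C (algebraMap R K c) * z := by
      rw [← Polynomial.algebraMap_apply, ← Algebra.smul_def, ← hcz]
      exact Polynomial.map_dvd _ w.primPart_dvd
    exact hc'.dvd_mul_left.1 this
  have hprim := w.isPrimitive_primPart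
  have hunit := h (hprim.dvd_of_fraction_map_dvd_fraction_map (K := K) (hdvd.trans hzp))
    (hprim.dvd_of_fraction_map_dvd_fraction_map (K := K) (hdvd.trans hzq))
  exact hz (Polynomial.isUnit_or_eq_zero_of_isUnit_integerNormalization_primPart hz0 hunit)

theorem exists_mul_add_mul_eq_C_of_isRelPrime {R : Type*} [CommRing R] [IsDomain R]
    [UniqueFactorizationMonoid R] {p q : Polynomial R} (h : IsRelPrime p q) (h0 : p ≠ 0) :
    ∃ r ≠ 0, ∃ u v : Polynomial R, p * u + q * v = Polynomial.C r := by
  by_cases H : p.natDegree ≠ 0 ∨ q.natDegree ≠ 0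
  · obtain ⟨u, v, -, -, huv⟩ := Polynomial.exists_mul_add_mul_eq_C_resultant p q le_rfl le_rfl H
    refine ⟨_, fun hr => ?_, u, v, huv⟩
    have hinj := IsFractionRing.injective R (FractionRing R)
    have := Polynomial.resultant_map_map p q p.natDegree q.natDegree
      (algebraMap R (FractionRing R))
    rw [hr, map_zero, ← Polynomial.natDegree_map_eq_of_injective hinj p,
      ← Polynomial.natDegree_map_eq_of_injective hinj q, Polynomial.resultant_eq_zero_iff] at this
    exact this.2 (isCoprime_map_of_isRelPrime _ h h0)
  · rw [not_or, not_not, not_not] at H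
    obtain ⟨r, hr⟩ := Polynomial.natDegree_eq_zero.1 H.1
    refine ⟨r, ?_, 1, 0, by simp [hr]⟩
    rintro rfl
    exact h0 (by simpa using hr.symm)

variable {κ : Type*} [Field κ]

theorem exists_forall_eval_ne_zero [Infinite κ] {F₁ F₂ : MvPolynomial (Fin 3) κ} (h0 : F₁ ≠ 0)
    (h : IsRelPrime F₁ F₂) :
    ∃ c y : κ, c ≠ 0 ∧ ∀ t, ¬ (eval ![t, c, y] F₁ = 0 ∧ eval ![t, c, y] F₂ = 0) := by
  have h' : IsRelPrime (finSuccEquiv κ 2 F₁) (finSuccEquiv κ 2 F₂) :=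
    IsRelPrime.of_map (finSuccEquiv κ 2).symm (by simpa using h)
  obtain ⟨r, hr, u, v, huv⟩ := exists_mul_add_mul_eq_C_of_isRelPrime h' (by simpa using h0)
  obtain ⟨s, hs⟩ : ∃ s, eval s (X 0 * r) ≠ 0 := by
    by_contra! hcon
    exact mul_ne_zero (X_ne_zero 0) hr (MvPolynomial.funext (by simpa using hcon))
  rw [map_mul, eval_X] at hs
  refine ⟨s 0, s 1, left_ne_zero_of_mul hs, fun t ht => right_ne_zero_of_mul hs ?_⟩
  have hvec : ![t, s 0, s 1] = Fin.cons t s := by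
    ext i; fin_cases i <;> rfl
  rw [hvec, eval_eq_eval_mv_eval', eval_eq_eval_mv_eval'] at ht
  have := congrArg (fun f => Polynomial.eval t (Polynomial.map (eval s) f)) huv
  simpa [ht.1, ht.2] using this.symm

theorem eval_smul_of_isHomogeneous {σ : Type*} {G : MvPolynomial σ κ} {d : ℕ}
    (hG : G.IsHomogeneous d) (c : κ) (z : σ → κ) : eval (c • z) G = c ^ d * eval z G := by
  rw [eval_eq, eval_eq, Finset.mul_sum]
  refine Finset.sum_congr rfl fun s hs => ?_
  rw [hG.degree_eq_sum_deg_support hs]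
  simp only [Pi.smul_apply, smul_eq_mul, mul_pow, Finset.prod_mul_distrib,
    Finset.prod_pow_eq_pow_sum]
  ring

/-- A line avoiding the common zeros of two coprime ternary forms. -/
theorem exists_line_avoiding [Infinite κ] {G₁ G₂ : MvPolynomial (Fin 3) κ} {d : ℕ}
    (hG₁0 : G₁ ≠ 0) (hG₁ : G₁.IsHomogeneous d) (hG₂ : G₂.IsHomogeneous d)
    (hcop : IsRelPrime G₁ G₂) :
    ∃ a b : κ, ∀ z : Fin 3 → κ, z 2 = a * z 1 + b * z 0 → eval z G₁ = 0 → eval z G₂ = 0 →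
      z = 0 := by
  let swap := renameEquiv κ (Equiv.swap (0 : Fin 3) 1)
  obtain ⟨c, y, hc, hcy⟩ := exists_forall_eval_ne_zero (F₁ := swap G₁) (F₂ := swap G₂)
    (by simpa using hG₁0) (IsRelPrime.of_map swap.symm (by simpa using hcop))
  let b := y / c
  let shear : MvPolynomial (Fin 3) κ ≃ₐ[κ] MvPolynomial (Fin 3) κ :=
    AlgEquiv.ofAlgHom (aeval ![X 0, X 1, X 2 + C b * X 0]) (aeval ![X 0, X 1, X 2 - C b * X 0])
      (by ext i : 1; fin_cases i <;> simp) (by ext i : 1; fin_cases i <;> simp)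
  obtain ⟨c', y', hc', hcy'⟩ := exists_forall_eval_ne_zero (F₁ := shear G₁) (F₂ := shear G₂)
    (by simpa using hG₁0) (IsRelPrime.of_map shear.symm (by simpa using hcop))
  have hswap : ∀ z G, eval z (swap G) = eval ![z 1, z 0, z 2] G := by
    intro z G
    simp only [swap, renameEquiv_apply, eval_rename]
    congr 2
    ext i; fin_cases i <;> rfl
  have hshear : ∀ z G, eval z (shear G) = eval ![z 0, z 1, z 2 + b * z 0] G := by
    intro z G
    simp only [shear, AlgEquiv.ofAlgHom_apply, ← aeval_eq_eval]
    rw [comp_aeval_apply]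
    congr 2
    ext i; fin_cases i <;> simp
  refine ⟨y' / c', b, fun z hz h₁ h₂ => ?_⟩
  by_cases hz1 : z 1 = 0
  · by_cases hz0 : z 0 = 0
    · ext i; fin_cases i <;> simp [hz, hz0, hz1]
    · refine absurd ?_ (hcy 0)
      have : ![c, 0, y] = (c / z 0) • z := by
        ext i; fin_cases i <;> simp [hz, hz1, b] <;> field_simp
      simp [hswap, this, eval_smul_of_isHomogeneous hG₁, eval_smul_of_isHomogeneous hG₂, h₁, h₂]
  · refine absurd ?_ (hcy' (c' / z 1 * z 0))
    have : ![c' / z 1 * z 0, c', y' + b * (c' / z 1 * z 0)] = (c' / z 1) • z := by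
      ext i; fin_cases i <;> simp [hz] <;> field_simp
    simp [hshear, this, eval_smul_of_isHomogeneous hG₁, eval_smul_of_isHomogeneous hG₂, h₁, h₂]

end Elimination

section Line

variable {κ : Type*} [Field κ]

/-- The restriction of ternary forms to the affine part of the line `x₂ = a * x₁ + b * x₀`,
parametrized by `t ↦ (t : 1 : a + b * t)`. -/
noncomputable def lineRestrict (a b : κ) : MvPolynomial (Fin 3) κ →ₐ[κ] Polynomial κ :=
  aeval ![Polynomial.X, 1, Polynomial.C a + Polynomial.C b * Polynomial.X]

/-- The linear form cutting out the line `x₂ = a * x₁ + b * x₀`. -/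
noncomputable def lineForm (a b : κ) : MvPolynomial (Fin 3) κ :=
  X 2 - (C a * X 1 + C b * X 0)

theorem isHomogeneous_lineForm (a b : κ) : (lineForm a b).IsHomogeneous 1 :=
  (isHomogeneous_X κ 2).sub ((isHomogeneous_C_mul_X a 1).add (isHomogeneous_C_mul_X b 0))

theorem lineForm_ne_zero (a b : κ) : lineForm a b ≠ 0 := by
  intro h
  have := congrArg (eval ![0, 0, 1]) h
  simp [lineForm] at this

@[simp]
theorem lineRestrict_lineForm (a b : κ) : lineRestrict a b (lineForm a b) = 0 := by
  simp [lineRestrict, lineForm]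

theorem eval_lineRestrict (a b t : κ) (f : MvPolynomial (Fin 3) κ) :
    (lineRestrict a b f).eval t = eval ![t, 1, a + b * t] f := by
  have h : (Polynomial.aeval t).comp (lineRestrict a b) = aeval ![t, 1, a + b * t] := by
    ext i; fin_cases i <;> simp [lineRestrict]
  simpa [aeval_eq_eval] using DFunLike.congr_fun h f

theorem lineRestrict_mem_degreeLT (a b : κ) {f : MvPolynomial (Fin 3) κ} {k : ℕ}
    (hf : f.IsHomogeneous k) : lineRestrict a b f ∈ Polynomial.degreeLT κ (k + 1) := by
  have hlin : (Polynomial.C a + Polynomial.C b * Polynomial.X).natDegree ≤ 1 := by compute_degree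
  have h := aeval_natDegree_le f hf.totalDegree_le
    ![Polynomial.X, 1, Polynomial.C a + Polynomial.C b * Polynomial.X] (n := 1)
    (fun i => by
      fin_cases i
      · simp
      · simp
      · exact hlin)
  rw [mul_one] at h
  rw [Polynomial.mem_degreeLT]
  exact (Polynomial.degree_le_of_natDegree_le h).trans_lt (by exact_mod_cast Nat.lt_succ_self k)

theorem coeff_lineRestrict (a b : κ) {f : MvPolynomial (Fin 3) κ} {k : ℕ}
    (hf : f.IsHomogeneous k) : (lineRestrict a b f).coeff k = eval ![1, 0, b] f := by
  have hlin : (Polynomial.C a + Polynomial.C b * Polynomial.X).natDegree ≤ 1 := by compute_degree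
  rw [lineRestrict, aeval_def, eval₂_eq', eval_eq', Polynomial.finsetSum_coeff]
  refine Finset.sum_congr rfl fun s hs => ?_
  have hk : k = s 0 + s 1 + s 2 := by
    rw [hf.degree_eq_sum_deg_support hs, ← Fin.sum_univ_three s]
    exact Finset.sum_subset (Finset.subset_univ _) fun i _ hi => by simpa using hi
  rw [← Polynomial.C_eq_algebraMap, Polynomial.coeff_C_mul, Fin.prod_univ_three,
    Fin.prod_univ_three]
  simp only [Matrix.cons_val, one_pow, mul_one, one_mul]
  rw [show k = s 1 + s 2 + s 0 by omega, Polynomial.coeff_X_pow_mul]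
  rcases Nat.eq_zero_or_pos (s 1) with h | h
  · have := Polynomial.coeff_pow_of_natDegree_le (m := s 2) hlin
    rw [mul_one] at this
    simp [h, this]
  · rw [Polynomial.coeff_eq_zero_of_natDegree_lt, zero_pow h.ne', zero_mul]
    have := Polynomial.natDegree_pow_le_of_le (s 2) hlin
    omega

theorem lineForm_dvd [Infinite κ] (a b : κ) {f : MvPolynomial (Fin 3) κ} {k : ℕ}
    (hf : f.IsHomogeneous k) (h0 : lineRestrict a b f = 0) : lineForm a b ∣ f := by
  let ψ : MvPolynomial (Fin 3) κ →ₐ[κ] MvPolynomial (Fin 3) κ :=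
    aeval ![X 0, X 1, C a * X 1 + C b * X 0]
  have hψ : ∀ z, eval z (ψ f) = eval ![z 0, z 1, a * z 1 + b * z 0] f := by
    intro z
    rw [← aeval_eq_eval, ← aeval_eq_eval]
    simp only [ψ, comp_aeval_apply]
    congr 2
    ext i; fin_cases i <;> simp
  have hzero : ψ f = 0 := by
    refine (mul_eq_zero.1 (MvPolynomial.funext fun z => ?_ : X 1 * ψ f = 0)).resolve_left
      (X_ne_zero 1)
    rw [map_mul, eval_X, map_zero, hψ]
    rcases eq_or_ne (z 1) 0 with h | h
    · rw [h, zero_mul]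
    · have : ![z 0, z 1, a * z 1 + b * z 0] = z 1 • ![z 0 / z 1, 1, a + b * (z 0 / z 1)] := by
        ext i; fin_cases i <;> simp <;> field_simp
      rw [this, eval_smul_of_isHomogeneous hf, ← eval_lineRestrict, h0]
      simp
  have hquot : (Ideal.Quotient.mkₐ κ (Ideal.span {lineForm a b})).comp ψ =
      Ideal.Quotient.mkₐ κ (Ideal.span {lineForm a b}) := by
    ext i
    fin_cases i
    · simp [ψ]
    · simp [ψ]
    · refine (Ideal.Quotient.eq.2 ?_).symm
      rw [Ideal.mem_span_singleton]
      simp [ψ, lineForm]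
  have := DFunLike.congr_fun hquot f
  rw [AlgHom.comp_apply, hzero, map_zero] at this
  exact Ideal.mem_span_singleton.1 (Ideal.Quotient.eq_zero_iff_mem.1 this.symm)

theorem homogeneousComponent_add_mul {σ : Type*} {g : MvPolynomial σ κ} {m : ℕ}
    (hg : g.IsHomogeneous m) (f : MvPolynomial σ κ) (k : ℕ) :
    homogeneousComponent (m + k) (g * f) = g * homogeneousComponent k f := by
  let _ : GradedAlgebra (homogeneousSubmodule σ κ) := MvPolynomial.gradedAlgebra
  rw [← decomposition.decompose'_apply, ← decomposition.decompose'_apply]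
  exact DirectSum.coe_decompose_mul_add_of_left_mem (homogeneousSubmodule σ κ) (j := k) hg (b := f)

end Line

section GradedPiece

variable {κ : Type*} [Field κ]

instance finiteDimensional_gradedIdealPiece (J : Ideal (MvPolynomial (Fin 3) κ)) (k : ℕ) :
    FiniteDimensional κ (gradedIdealPiece κ J k) :=
  have : FiniteDimensional κ (homogeneousSubmodule (Fin 3) κ k) :=
    Module.Finite.iff_fg.2 (homogeneousSubmodule_fg (Fin 3) κ k)
  Submodule.finiteDimensional_of_le inf_le_right

/-- The image of the degree-`k` piece of `J` under restriction to a line. -/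
noncomputable def restrictedPiece (J : Ideal (MvPolynomial (Fin 3) κ)) (a b : κ) (k : ℕ) :
    Submodule κ (Polynomial κ) :=
  (gradedIdealPiece κ J k).map (lineRestrict a b).toLinearMap

theorem restrictedPiece_le_degreeLT (J : Ideal (MvPolynomial (Fin 3) κ)) (a b : κ) (k : ℕ) :
    restrictedPiece J a b k ≤ Polynomial.degreeLT κ (k + 1) := by
  rintro _ ⟨f, hf, rfl⟩
  exact lineRestrict_mem_degreeLT a b hf.2

theorem restrictedPiece_le_succ (J : Ideal (MvPolynomial (Fin 3) κ)) (a b : κ) (k : ℕ) :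
    restrictedPiece J a b k ≤ restrictedPiece J a b (k + 1) := by
  rintro _ ⟨f, hf, rfl⟩
  refine ⟨f * X 1, ⟨J.mul_mem_right _ hf.1, hf.2.mul (isHomogeneous_X κ 1)⟩, ?_⟩
  simp [lineRestrict]

theorem map_mulLeft_X_restrictedPiece_le (J : Ideal (MvPolynomial (Fin 3) κ)) (a b : κ) (k : ℕ) :
    (restrictedPiece J a b k).map (LinearMap.mulLeft κ Polynomial.X) ≤
      restrictedPiece J a b (k + 1) := by
  rintro _ ⟨_, ⟨f, hf, rfl⟩, rfl⟩
  refine ⟨f * X 0, ⟨J.mul_mem_right _ hf.1, hf.2.mul (isHomogeneous_X κ 0)⟩, ?_⟩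
  simp only [AlgHom.toLinearMap_apply, map_mul, LinearMap.mulLeft_apply]
  rw [mul_comm]
  congr 1
  simp [lineRestrict]

theorem finrank_restrictedPiece_le (J : Ideal (MvPolynomial (Fin 3) κ)) (a b : κ) (k : ℕ) :
    Module.finrank κ (restrictedPiece J a b k) ≤ k + 1 :=
  (Submodule.finrank_mono (restrictedPiece_le_degreeLT J a b k)).trans_eq (finrank_degreeLT _)

theorem Submodule.finrank_map_add_finrank_inf_ker {V W : Type*} [AddCommGroup V] [Module κ V]
    [AddCommGroup W] [Module κ W] (f : V →ₗ[κ] W) (p : Submodule κ V) [FiniteDimensional κ p] :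
    Module.finrank κ (p.map f) + Module.finrank κ (p ⊓ LinearMap.ker f : Submodule κ V) =
      Module.finrank κ p := by
  rw [← LinearMap.finrank_range_add_finrank_ker (f.domRestrict p), LinearMap.range_domRestrict,
    LinearMap.ker_domRestrict, ← Submodule.map_comap_subtype,
    Submodule.finrank_map_subtype_eq]

theorem finrank_gradedIdealPiece_zero (J : Ideal (MvPolynomial (Fin 3) κ)) (a b : κ) :
    Module.finrank κ (gradedIdealPiece κ J 0) = Module.finrank κ (restrictedPiece J a b 0) := by
  rw [restrictedPiece, ← Submodule.finrank_map_add_finrank_inf_ker (lineRestrict a b).toLinearMap,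
    Nat.add_eq_left, Submodule.finrank_eq_zero, eq_bot_iff]
  rintro f ⟨hf, hf0⟩
  obtain ⟨c, rfl⟩ : ∃ c, f = C c :=
    ⟨_, totalDegree_eq_zero_iff_eq_C.1 ((totalDegree_zero_iff_isHomogeneous _).2 hf.2)⟩
  simpa [lineRestrict] using hf0

theorem finrank_gradedIdealPiece_succ [Infinite κ] {J : Ideal (MvPolynomial (Fin 3) κ)} {a b : κ}
    (hreg : ∀ f, lineForm a b * f ∈ J → f ∈ J) (k : ℕ) :
    Module.finrank κ (gradedIdealPiece κ J (k + 1)) =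
      Module.finrank κ (restrictedPiece J a b (k + 1)) +
        Module.finrank κ (gradedIdealPiece κ J k) := by
  have hker : gradedIdealPiece κ J (k + 1) ⊓ LinearMap.ker (lineRestrict a b).toLinearMap =
      (gradedIdealPiece κ J k).map (LinearMap.mulLeft κ (lineForm a b)) := by
    apply le_antisymm
    · rintro f ⟨hf, hf0⟩
      obtain ⟨g, rfl⟩ := lineForm_dvd a b hf.2 hf0
      have hcomp : lineForm a b * g = lineForm a b * homogeneousComponent k g := by
        rw [← homogeneousComponent_add_mul (isHomogeneous_lineForm a b), add_comm]
        exact (homogeneousComponent_eq_self hf.2).symm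
      refine ⟨homogeneousComponent k g, ⟨hreg _ ?_, homogeneousComponent_isHomogeneous k g⟩,
        hcomp.symm⟩
      rw [← hcomp]
      exact hf.1
    · rintro _ ⟨f, hf, rfl⟩
      refine ⟨⟨J.mul_mem_left _ hf.1, ?_⟩, by simp⟩
      rw [add_comm]
      exact (isHomogeneous_lineForm a b).mul hf.2
  rw [restrictedPiece, ← Submodule.finrank_map_add_finrank_inf_ker (lineRestrict a b).toLinearMap,
    hker, ← (Submodule.equivMapOfInjective _ (mul_right_injective₀ (lineForm_ne_zero a b))
      (gradedIdealPiece κ J k)).finrank_eq]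

theorem choose_eq_finrank_gradedIdealPiece_add_sum [Infinite κ]
    {J : Ideal (MvPolynomial (Fin 3) κ)} {a b : κ}
    (hreg : ∀ f, lineForm a b * f ∈ J → f ∈ J) (k : ℕ) :
    Nat.choose (k + 2) 2 = Module.finrank κ (gradedIdealPiece κ J k) +
      ∑ j ∈ Finset.range (k + 1), (j + 1 - Module.finrank κ (restrictedPiece J a b j)) := by
  induction k with
  | zero =>
    have := finrank_restrictedPiece_le J a b 0
    rw [finrank_gradedIdealPiece_zero J a b]
    simp
    omega
  | succ k ih =>
    have := finrank_restrictedPiece_le J a b (k + 1)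
    rw [finrank_gradedIdealPiece_succ hreg, Finset.sum_range_succ,
      show k + 1 + 2 = (k + 2) + 1 from rfl, Nat.choose_succ_succ' (k + 2) 1, ih,
      Nat.choose_one_right]
    omega

/-- A linear form with no zero in common with `G₁, G₂` is a nonzerodivisor modulo every saturated
ideal containing `G₁, G₂`. -/
theorem mem_of_lineForm_mul_mem [IsAlgClosed κ] {G₁ G₂ : MvPolynomial (Fin 3) κ} {a b : κ}
    (hline : ∀ z : Fin 3 → κ, z 2 = a * z 1 + b * z 0 → eval z G₁ = 0 → eval z G₂ = 0 → z = 0)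
    {J : Ideal (MvPolynomial (Fin 3) κ)} (h₁ : G₁ ∈ J) (h₂ : G₂ ∈ J)
    (hJsat : ∀ f : MvPolynomial (Fin 3) κ,
      (∃ n : ℕ, ∀ i : Fin 3, (MvPolynomial.X i) ^ n * f ∈ J) → f ∈ J)
    (f : MvPolynomial (Fin 3) κ) (hf : lineForm a b * f ∈ J) : f ∈ J := by
  have hrad : ∀ i : Fin 3, X i ∈ (Ideal.span {G₁, G₂, lineForm a b}).radical := by
    intro i
    rw [← vanishingIdeal_zeroLocus_eq_radical (K := κ), mem_vanishingIdeal_iff]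
    intro z hz
    have hmem : ∀ G ∈ ({G₁, G₂, lineForm a b} : Set (MvPolynomial (Fin 3) κ)), eval z G = 0 :=
      fun G hG => by simpa [aeval_eq_eval] using hz G (Ideal.subset_span hG)
    have h₃ := hmem (lineForm a b) (by simp)
    have : z = 0 := hline z (by simpa [lineForm, sub_eq_zero] using h₃) (hmem G₁ (by simp))
      (hmem G₂ (by simp))
    simp [this]
  have hcolon : ∀ g ∈ Ideal.span {G₁, G₂, lineForm a b}, g * f ∈ J := by
    have : Ideal.span {G₁, G₂, lineForm a b} ≤
        Submodule.comap (LinearMap.mulRight (MvPolynomial (Fin 3) κ) f) J := by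
      rw [Ideal.span_le]
      rintro g (rfl | rfl | rfl)
      · exact J.mul_mem_right _ h₁
      · exact J.mul_mem_right _ h₂
      · exact hf
    exact fun g hg => this hg
  choose n hn using hrad
  refine hJsat f ⟨∑ i, n i, fun i => hcolon _ ?_⟩
  exact Ideal.pow_mem_of_pow_mem _ (hn i) (Finset.single_le_sum (by simp) (Finset.mem_univ i))

theorem three_mul_le_sum {c : ℕ → ℕ} {e : ℕ} (htop : c (e + 2) ≤ e + 2) (hmid : c (e + 1) ≤ e)
    (hlow : ∀ k ≤ e, c k ≤ k - 2) :
    3 * (e + 1) ≤ ∑ j ∈ Finset.range (e + 3), (j + 1 - c j) := by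
  have hsum : ∀ n ≤ e, 3 * n ≤ ∑ j ∈ Finset.range (n + 1), (j + 1 - c j) := by
    intro n
    induction n with
    | zero => simp
    | succ n ih =>
      intro hn
      have := ih (by omega)
      rcases Nat.eq_zero_or_pos n with rfl | hpos
      · have h₀ : c 0 ≤ 0 := hlow 0 (by omega)
        have h₁ : c 1 ≤ 0 := hlow 1 hn
        rw [Finset.sum_range_succ, Finset.sum_range_one]
        omega
      · have h₁ := hlow (n + 1) hn
        rw [Finset.sum_range_succ]
        omega
  have := hsum e le_rfl
  rw [Finset.sum_range_succ, Finset.sum_range_succ]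
  omega

end GradedPiece

/-- Let `G₁, G₂` be coprime degree-`d` forms in `κ[x_0,x_1,x_2]` and let
`X ⊆ V(G₁,G₂)` be a subscheme, given by a saturated homogeneous ideal `J`
containing `(G₁,G₂)`, of length `L ≤ 3d−1` (the length being the eventually
constant value `L` of the Hilbert function `k ↦ C(k+2,2) − dim J_k`). Then `X`
imposes independent conditions on degree-`d` forms:
`dim I_d(X) = C(d+2,2) − L`, i.e. `g_X(d) = 0`. -/
theorem independent_conditions_of_length_le
    (κ : Type*) [Field κ] [IsAlgClosed κ] (d : ℕ) (hd : 1 ≤ d)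
    (G₁ G₂ : MvPolynomial (Fin 3) κ) (hG₁0 : G₁ ≠ 0) (hG₂0 : G₂ ≠ 0)
    (hG₁ : G₁.IsHomogeneous d) (hG₂ : G₂.IsHomogeneous d) (hcop : IsRelPrime G₁ G₂)
    (J : Ideal (MvPolynomial (Fin 3) κ)) (hJsub : Ideal.span {G₁, G₂} ≤ J)
    (hJhom : ∀ f ∈ J, ∀ k : ℕ, MvPolynomial.homogeneousComponent k f ∈ J)
    (hJsat : ∀ f : MvPolynomial (Fin 3) κ,
      (∃ n : ℕ, ∀ i : Fin 3, (MvPolynomial.X i) ^ n * f ∈ J) → f ∈ J)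
    (L N : ℕ)
    (hL : ∀ k : ℕ, N ≤ k →
      Nat.choose (k + 2) 2 - Module.finrank κ (gradedIdealPiece κ J k) = L)
    (hlen : L ≤ 3 * d - 1) :
    Module.finrank κ (gradedIdealPiece κ J d) = Nat.choose (d + 2) 2 - L := by
  obtain ⟨a, b, hline⟩ := exists_line_avoiding hG₁0 hG₁ hG₂ hcop
  have hJ₁ : G₁ ∈ J := hJsub (Ideal.subset_span (by simp))
  have hJ₂ : G₂ ∈ J := hJsub (Ideal.subset_span (by simp))
  have hchoose := choose_eq_finrank_gradedIdealPiece_add_sum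
    (mem_of_lineForm_mul_mem hline hJ₁ hJ₂ hJsat)
  set V := restrictedPiece J a b with hVdef
  have hVle := restrictedPiece_le_degreeLT J a b
  have hV₁ := restrictedPiece_le_succ J a b
  have hV₂ := map_mulLeft_X_restrictedPiece_le J a b
  have hVrank := finrank_restrictedPiece_le J a b
  rw [← hVdef] at hVle hV₁ hV₂ hVrank
  have hfin : ∀ k, FiniteDimensional κ (V k) := fun k =>
    Submodule.finiteDimensional_of_le (hVle k)
  have hg₁ : lineRestrict a b G₁ ∈ V d := ⟨G₁, ⟨hJ₁, hG₁⟩, rfl⟩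
  have hg₂ : lineRestrict a b G₂ ∈ V d := ⟨G₂, ⟨hJ₂, hG₂⟩, rfl⟩
  have hcoprime : IsCoprime (lineRestrict a b G₁) (lineRestrict a b G₂) := by
    refine (Polynomial.isCoprime_iff_aeval_ne_zero_of_isAlgClosed κ κ _ _).2 fun t => ?_
    by_contra! hcon
    rw [Polynomial.coe_aeval_eq_eval, eval_lineRestrict, eval_lineRestrict] at hcon
    simpa using congrFun (hline ![t, 1, a + b * t] (by simp) hcon.1 hcon.2) 1
  have hr : ∃ r ∈ V d, r.coeff d ≠ 0 := by
    by_contra! hcon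
    have h₁ := hcon _ hg₁
    have h₂ := hcon _ hg₂
    rw [coeff_lineRestrict a b hG₁] at h₁
    rw [coeff_lineRestrict a b hG₂] at h₂
    simpa using congrFun (hline ![1, 0, b] (by simp) h₁ h₂) 0
  obtain ⟨r, hrV, hrd⟩ := hr
  have hr0 : r ≠ 0 := by rintro rfl; simp at hrd
  have hrdeg : r.natDegree = d := by
    refine le_antisymm ?_ (Polynomial.le_natDegree_of_ne_zero hrd)
    exact Nat.lt_succ_iff.1
      ((Polynomial.natDegree_lt_iff_degree_lt hr0).2 (Polynomial.mem_degreeLT.1 (hVle d hrV)))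
  have hLsum : ∀ k, N ≤ k →
      L = ∑ j ∈ Finset.range (k + 1), (j + 1 - Module.finrank κ (V j)) := by
    intro k hk
    have := hL k hk
    have := hchoose k
    omega
  have hfull : d + 2 ≤ Module.finrank κ (V (d + 1)) := by
    by_contra hcon
    obtain ⟨e, rfl⟩ : ∃ e, d = e + 1 := ⟨d - 1, by omega⟩
    obtain ⟨hmid, hlow⟩ := finrank_le_of_isCoprime hVle hV₁ hV₂ hcoprime hg₁ hg₂ hrV hr0 hrdeg
      (by omega)
    have hlower := three_mul_le_sum (c := fun j => Module.finrank κ (V j)) (e := e)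
      (show Module.finrank κ (V (e + 1 + 1)) ≤ e + 2 by omega) hmid hlow
    have hmono : ∑ j ∈ Finset.range (e + 3), (j + 1 - Module.finrank κ (V j)) ≤
        ∑ j ∈ Finset.range (N + (e + 2) + 1), (j + 1 - Module.finrank κ (V j)) :=
      Finset.sum_le_sum_of_subset (Finset.range_subset_range.2 (by omega))
    rw [← hLsum (N + (e + 2)) (by omega)] at hmono
    omega
  have hfull' : ∀ j, d + 1 + j + 1 ≤ Module.finrank κ (V (d + 1 + j)) := by
    intro j
    induction j with
    | zero => exact hfull
    | succ j ih =>
      have hne : V (d + 1 + j) ≠ ⊥ := fun h => by rw [h, finrank_bot] at ih; omega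
      have := finrank_add_one_le hne (hV₁ _) (hV₂ _)
      rw [← add_assoc]
      omega
  have hLd : L = ∑ j ∈ Finset.range (d + 1), (j + 1 - Module.finrank κ (V j)) := by
    rw [hLsum (d + N) (by omega), show d + N + 1 = d + 1 + N by omega, Finset.sum_range_add,
      Finset.sum_eq_zero (s := Finset.range N), add_zero]
    intro j _
    have := hfull' j
    omega
  have := hchoose d
  omega
end

section
/- Let κ be an algebraically closed field, d ≥ 1, and let u_r(d,2) = max{|V(W)| : W ⊆ κ[x_0,x_1,x_2]_d a subspace with dim W = r and dim V(W) = 0}. If 1 + binom(d−1,2) < r ≤ binom(d+2,2), then u_r(d,2) = binom(d+2,2) − r. -/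
open MvPolynomial

/-- The common vanishing locus `V(W) ⊆ ℙ²(κ)` of a set `W` of polynomials in
`κ[x_0,x_1,x_2]`. -/
def projZeroLocus (κ : Type*) [Field κ]
    (W : Submodule κ (MvPolynomial (Fin 3) κ)) :
    Set (Projectivization κ (Fin 3 → κ)) :=
  {p | ∀ f ∈ W, MvPolynomial.eval p.rep f = 0}

namespace MvPolynomial

/-- A nonzero multiple of `f` can only be homogeneous if `f` is. -/
theorem IsHomogeneous.exists_isHomogeneous_of_mul {σ R : Type*} [CommRing R] [IsDomain R]
    {f g : MvPolynomial σ R} {n : ℕ} (h : (f * g).IsHomogeneous n) (h0 : f * g ≠ 0) :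
    ∃ a b, f.IsHomogeneous a ∧ g.IsHomogeneous b ∧ a + b = n := by
  let φ : MvPolynomial σ R →ₐ[R] Polynomial (MvPolynomial σ R) :=
    MvPolynomial.aeval fun i ↦ Polynomial.C (X i) * Polynomial.X
  have hφmon (u : σ →₀ ℕ) (c : R) :
      φ (monomial u c) = Polynomial.monomial u.degree (monomial u c) := by
    simp only [φ, aeval_monomial, Finsupp.prod, mul_pow, Finset.prod_mul_distrib,
      Finset.prod_pow_eq_pow_sum, ← Polynomial.C_mul_X_pow_eq_monomial, Finsupp.degree]
    rw [← mul_assoc, monomial_eq, Polynomial.C_mul, Finsupp.prod, map_prod]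
    simp only [Polynomial.C_pow]
    rfl
  have hφcoeff (p : MvPolynomial σ R) (k : ℕ) :
      (φ p).coeff k = homogeneousComponent k p := by
    induction p using MvPolynomial.induction_on' with
    | monomial u c =>
      rw [hφmon, Polynomial.coeff_monomial,
        homogeneousComponent_of_mem (isHomogeneous_monomial c rfl)]
      simp only [eq_comm]
    | add p q hp hq => rw [map_add, map_add, Polynomial.coeff_add, hp, hq]
  have hφinj (p : MvPolynomial σ R) (hp : φ p = 0) : p = 0 := by
    rw [← sum_homogeneousComponent p]
    exact Finset.sum_eq_zero fun k _ ↦ by rw [← hφcoeff, hp, Polynomial.coeff_zero]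
  have key (p : MvPolynomial σ R) (hp : (φ p).natDegree = (φ p).natTrailingDegree) :
      p.IsHomogeneous (φ p).natDegree := by
    have hc (k : ℕ) (hk : k ≠ (φ p).natDegree) : homogeneousComponent k p = 0 := by
      rw [← hφcoeff]
      rcases lt_or_gt_of_ne hk with hk | hk
      · exact Polynomial.coeff_eq_zero_of_lt_natTrailingDegree (hp ▸ hk)
      · exact Polynomial.coeff_eq_zero_of_natDegree_lt hk
    rw [← sum_homogeneousComponent p]
    refine IsHomogeneous.sum _ _ _ fun k _ ↦ ?_
    by_cases hk : k = (φ p).natDegree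
    · rw [sum_homogeneousComponent, ← hk]
      exact homogeneousComponent_isHomogeneous k p
    · rw [hc k hk]; exact isHomogeneous_zero _ _ _
  have hmul : φ (f * g) = Polynomial.monomial n (f * g) := by
    ext1 k
    rw [hφcoeff, Polynomial.coeff_monomial, homogeneousComponent_of_mem h]
    simp only [eq_comm]
  have hf0 : φ f ≠ 0 := fun hf ↦ h0 (by rw [hφinj f hf, zero_mul])
  have hg0 : φ g ≠ 0 := fun hg ↦ h0 (by rw [hφinj g hg, mul_zero])
  have h1 : (φ f).natDegree + (φ g).natDegree = n := by
    rw [← Polynomial.natDegree_mul hf0 hg0, ← map_mul, hmul,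
      Polynomial.natDegree_monomial_eq n h0]
  have h2 : (φ f).natTrailingDegree + (φ g).natTrailingDegree = n := by
    rw [← Polynomial.natTrailingDegree_mul hf0 hg0, ← map_mul, hmul,
      Polynomial.natTrailingDegree_monomial h0]
  have h3 := Polynomial.natTrailingDegree_le_natDegree (φ f)
  have h4 := Polynomial.natTrailingDegree_le_natDegree (φ g)
  exact ⟨_, _, key f (by lia), key g (by lia), h1⟩

theorem finrank_homogeneousSubmodule_fin_three (κ : Type*) [Field κ] (d : ℕ) :
    Module.finrank κ (homogeneousSubmodule (Fin 3) κ d) = (d + 2).choose 2 := by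
  have hs : {u : Fin 3 →₀ ℕ | u.degree = d} =
      ↑(Finset.univ.finsuppAntidiag d : Finset (Fin 3 →₀ ℕ)) := by
    ext u
    simp [Finsupp.degree_eq_sum]
  rw [homogeneousSubmodule_eq_finsupp_supported, hs, AddMonoidAlgebra.supported_eq_map]
  erw [LinearEquiv.finrank_map_eq]
  rw [(Finsupp.supportedEquivFinsupp _).finrank_eq, Module.finrank_finsupp_self]
  simp only [Finset.coe_sort_coe, Fintype.card_coe, Finset.card_finsuppAntidiag_nat_eq_choose]
  rw [Finset.card_univ, Fintype.card_fin, show 3 + d - 1 = d + 2 by lia]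
  exact Nat.choose_symm_of_eq_add rfl

instance finite_homogeneousSubmodule {σ κ : Type*} [Finite σ] [Field κ] (d : ℕ) :
    Module.Finite κ (homogeneousSubmodule σ κ d) :=
  Module.Finite.iff_fg.2 (homogeneousSubmodule_fg σ κ d)

end MvPolynomial

namespace PlaneForms

variable {κ : Type*} [Field κ]

/-- Evaluation of degree `d` forms at (the chosen representatives of) the points of `Z`. -/
noncomputable def evalOn (d : ℕ) (Z : Finset (Projectivization κ (Fin 3 → κ))) :
    homogeneousSubmodule (Fin 3) κ d →ₗ[κ] (Z → κ) where
  toFun f p := eval p.1.rep f.1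
  map_add' f g := by ext; simp
  map_smul' c f := by ext; simp

@[simp]
theorem evalOn_apply (d : ℕ) (Z : Finset (Projectivization κ (Fin 3 → κ)))
    (f : homogeneousSubmodule (Fin 3) κ d) (p : Z) : evalOn d Z f p = eval p.1.rep f.1 := rfl

/-- The forms of degree `d` vanishing on `Z`. -/
noncomputable def vanishingForms (d : ℕ) (Z : Finset (Projectivization κ (Fin 3 → κ))) :
    Submodule κ (MvPolynomial (Fin 3) κ) :=
  (LinearMap.ker (evalOn d Z)).map (Submodule.subtype _)

theorem mem_vanishingForms {d : ℕ} {Z : Finset (Projectivization κ (Fin 3 → κ))}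
    {f : MvPolynomial (Fin 3) κ} :
    f ∈ vanishingForms d Z ↔ f.IsHomogeneous d ∧ ∀ p ∈ Z, eval p.rep f = 0 := by
  simp [vanishingForms, funext_iff, and_comm]

instance (d : ℕ) (Z : Finset (Projectivization κ (Fin 3 → κ))) :
    Module.Finite κ (vanishingForms d Z) := by
  unfold vanishingForms; infer_instance

/-- The number of conditions that `Z` imposes on forms of degree `d`. -/
noncomputable def hilbert (d : ℕ) (Z : Finset (Projectivization κ (Fin 3 → κ))) : ℕ :=
  Module.finrank κ (LinearMap.range (evalOn d Z))

theorem hilbert_add_finrank_vanishingForms (d : ℕ)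
    (Z : Finset (Projectivization κ (Fin 3 → κ))) :
    hilbert d Z + Module.finrank κ (vanishingForms d Z) = (d + 2).choose 2 := by
  rw [vanishingForms, Submodule.finrank_map_subtype_eq, hilbert,
    LinearMap.finrank_range_add_finrank_ker, finrank_homogeneousSubmodule_fin_three]

theorem hilbert_eq_card {d : ℕ} {Z : Finset (Projectivization κ (Fin 3 → κ))}
    (h : Function.Surjective (evalOn d Z)) : hilbert d Z = Z.card := by
  rw [hilbert, LinearMap.range_eq_top.2 h, finrank_top, Module.finrank_fintype_fun_eq_card,
    Fintype.card_coe]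

/-- There is a linear relation between the evaluations of degree `d` forms at the points of `Z`
all of whose coefficients are nonzero. -/
def HasFullRelation (d : ℕ) (Z : Finset (Projectivization κ (Fin 3 → κ))) : Prop :=
  ∃ c : Projectivization κ (Fin 3 → κ) → κ, (∀ p ∈ Z, c p ≠ 0) ∧
    ∀ f : MvPolynomial (Fin 3) κ, f.IsHomogeneous d → ∑ p ∈ Z, c p * eval p.rep f = 0

open scoped Classical in
/-- The points of `Z` off the curve `F = 0`. -/
noncomputable def off (F : MvPolynomial (Fin 3) κ)
    (Z : Finset (Projectivization κ (Fin 3 → κ))) : Finset (Projectivization κ (Fin 3 → κ)) :=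
  Z.filter fun p ↦ eval p.rep F ≠ 0

theorem mem_off {F : MvPolynomial (Fin 3) κ} {Z : Finset (Projectivization κ (Fin 3 → κ))}
    {p : Projectivization κ (Fin 3 → κ)} : p ∈ off F Z ↔ p ∈ Z ∧ eval p.rep F ≠ 0 := by
  simp [off]

theorem off_subset (F : MvPolynomial (Fin 3) κ)
    (Z : Finset (Projectivization κ (Fin 3 → κ))) : off F Z ⊆ Z := fun _ h ↦ (mem_off.1 h).1

theorem off_eq_empty {F : MvPolynomial (Fin 3) κ}
    {Z : Finset (Projectivization κ (Fin 3 → κ))} :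
    off F Z = ∅ ↔ ∀ p ∈ Z, eval p.rep F = 0 := by
  simp [off, Finset.filter_eq_empty_iff]

/-- A subset of `Z` on the curve `F = 0` is disjoint from the points off it. -/
theorem card_off_add_card_le {F : MvPolynomial (Fin 3) κ}
    {Y Z : Finset (Projectivization κ (Fin 3 → κ))} (hYZ : Y ⊆ Z)
    (hY : ∀ p ∈ Y, eval p.rep F = 0) : (off F Z).card + Y.card ≤ Z.card := by
  classical
  rw [← Finset.card_union_of_disjoint]
  · exact Finset.card_le_card (Finset.union_subset (off_subset F Z) hYZ)
  · exact Finset.disjoint_left.2 fun p hp hpY ↦ (mem_off.1 hp).2 (hY p hpY)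

theorem HasFullRelation.residual {k e : ℕ} {Z : Finset (Projectivization κ (Fin 3 → κ))}
    (h : HasFullRelation (k + e) Z) {F : MvPolynomial (Fin 3) κ} (hF : F.IsHomogeneous e) :
    HasFullRelation k (off F Z) := by
  classical
  obtain ⟨c, hc, hrel⟩ := h
  refine ⟨fun p ↦ c p * eval p.rep F,
    fun p hp ↦ mul_ne_zero (hc p (mem_off.1 hp).1) (mem_off.1 hp).2, fun f hf ↦ ?_⟩
  rw [off, Finset.sum_filter_of_ne]
  · rw [← hrel _ (hf.mul hF)]
    exact Finset.sum_congr rfl fun p _ ↦ by rw [map_mul]; ring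
  · intro p _ hne h0
    simp [h0] at hne

theorem exists_hasFullRelation {d : ℕ} {Z : Finset (Projectivization κ (Fin 3 → κ))}
    (h : ¬ Function.Surjective (evalOn d Z)) :
    ∃ Y ⊆ Z, Y.Nonempty ∧ HasFullRelation d Y := by
  classical
  rw [← LinearMap.range_eq_top] at h
  obtain ⟨φ, hφ, hle⟩ := Submodule.exists_le_ker_of_lt_top _ (lt_top_iff_ne_top.2 h)
  let c : Projectivization κ (Fin 3 → κ) → κ :=
    fun p ↦ if hp : p ∈ Z then φ (Pi.single ⟨p, hp⟩ 1) else 0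
  have hsum (v : Projectivization κ (Fin 3 → κ) → κ) :
      φ (fun p : Z ↦ v p.1) = ∑ p ∈ Z, c p * v p := by
    rw [LinearMap.pi_apply_eq_sum_univ φ, ← Finset.sum_coe_sort Z]
    refine Finset.sum_congr rfl fun p _ ↦ ?_
    rw [show c p = φ (Pi.single p 1) from dif_pos p.2, smul_eq_mul, mul_comm]
    congr 2
    ext q
    simp [Pi.single_apply, eq_comm]
  refine ⟨Z.filter fun p ↦ c p ≠ 0, Finset.filter_subset _ _, ?_, c, by simp, fun f hf ↦ ?_⟩
  · rw [Finset.nonempty_iff_ne_empty]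
    intro hempty
    have hc0 : ∀ p ∈ Z, c p = 0 := by simpa [Finset.filter_eq_empty_iff] using hempty
    refine hφ (LinearMap.pi_ext' fun p ↦ LinearMap.ext_ring ?_)
    simpa [c] using hc0 p p.2
  · rw [Finset.sum_filter_of_ne fun p _ hne h0 ↦ by simp [h0] at hne, ← hsum]
    exact hle ⟨⟨f, hf⟩, rfl⟩

theorem exists_linear_separating {p q : Projectivization κ (Fin 3 → κ)} (h : p ≠ q) :
    ∃ L : MvPolynomial (Fin 3) κ, L.IsHomogeneous 1 ∧ eval p.rep L = 0 ∧ eval q.rep L ≠ 0 := by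
  have hq : q.rep ∉ Submodule.span κ {p.rep} := by
    rw [Submodule.mem_span_singleton]
    rintro ⟨a, ha⟩
    apply h
    rw [← p.mk_rep, ← q.mk_rep]
    exact ((Projectivization.mk_eq_mk_iff' κ _ _ q.rep_nonzero p.rep_nonzero).2 ⟨a, ha⟩).symm
  obtain ⟨φ, hφ, hle⟩ := Submodule.exists_le_ker_of_notMem hq
  have hev (v : Fin 3 → κ) :
      eval v (∑ i, C (φ fun j ↦ if i = j then 1 else 0) * X i) = φ v := by
    rw [LinearMap.pi_apply_eq_sum_univ φ v]
    simp [mul_comm]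
  refine ⟨∑ i, C (φ fun j ↦ if i = j then 1 else 0) * X i,
    IsHomogeneous.sum _ _ _ fun i _ ↦ isHomogeneous_C_mul_X _ i, ?_, ?_⟩
  · rw [hev]; exact hle (Submodule.mem_span_singleton_self _)
  · rwa [hev]

/-- `Z` lies on a plane curve of degree `e`. -/
def OnCurve (e : ℕ) (Z : Finset (Projectivization κ (Fin 3 → κ))) : Prop :=
  ∃ F : MvPolynomial (Fin 3) κ, F ≠ 0 ∧ F.IsHomogeneous e ∧ ∀ p ∈ Z, eval p.rep F = 0

theorem onCurve_of_card_lt {e : ℕ} {Z : Finset (Projectivization κ (Fin 3 → κ))}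
    (h : Z.card < (e + 2).choose 2) : OnCurve e Z := by
  have hker : LinearMap.ker (evalOn e Z) ≠ ⊥ := by
    apply LinearMap.ker_ne_bot_of_finrank_lt
    rwa [finrank_homogeneousSubmodule_fin_three, Module.finrank_fintype_fun_eq_card,
      Fintype.card_coe]
  obtain ⟨f, hf, h0⟩ := (Submodule.ne_bot_iff _).1 hker
  exact ⟨f, by simpa using h0, f.2, fun p hp ↦ congrFun (LinearMap.mem_ker.1 hf) ⟨p, hp⟩⟩

theorem OnCurve.mul_of_off {a b : ℕ} {Z : Finset (Projectivization κ (Fin 3 → κ))}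
    {F : MvPolynomial (Fin 3) κ} (h0 : F ≠ 0) (hF : F.IsHomogeneous a)
    (h : OnCurve b (off F Z)) : OnCurve (a + b) Z := by
  obtain ⟨G, hG0, hG, hGv⟩ := h
  refine ⟨F * G, mul_ne_zero h0 hG0, hF.mul hG, fun p hp ↦ ?_⟩
  rw [map_mul, mul_eq_zero, or_iff_not_imp_left]
  exact fun hne ↦ hGv p (mem_off.2 ⟨hp, hne⟩)

theorem HasFullRelation.one_lt_card {d : ℕ} {Z : Finset (Projectivization κ (Fin 3 → κ))}
    (h : HasFullRelation d Z) (hZ : Z.Nonempty) : 1 < Z.card := by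
  by_contra hle
  obtain ⟨p, rfl⟩ := Finset.card_eq_one.1 (le_antisymm (not_lt.1 hle) hZ.card_pos)
  obtain ⟨c, hc, hrel⟩ := h
  obtain ⟨i, hi⟩ := Function.ne_iff.1 p.rep_nonzero
  have hX := hrel (X i ^ d) (by simpa using isHomogeneous_X_pow (R := κ) i d)
  simp only [Finset.sum_singleton, map_pow, eval_X, mul_eq_zero] at hX
  exact hX.elim (hc p (by simp)) (pow_ne_zero d hi)

theorem HasFullRelation.add_two_le_card {d : ℕ} {Z : Finset (Projectivization κ (Fin 3 → κ))}
    (h : HasFullRelation d Z) (hZ : Z.Nonempty) : d + 2 ≤ Z.card := by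
  induction d generalizing Z with
  | zero => exact h.one_lt_card hZ
  | succ d ih =>
    obtain ⟨p, hp, q, hq, hpq⟩ := Finset.one_lt_card.1 (h.one_lt_card hZ)
    obtain ⟨L, hL, hLp, hLq⟩ := exists_linear_separating hpq
    have hcard := card_off_add_card_le (F := L) (Y := {p}) (Z := Z) (by simpa) (by simpa)
    have hres := ih (h.residual hL) ⟨q, mem_off.2 ⟨hq, hLq⟩⟩
    rw [Finset.card_singleton] at hcard
    lia

theorem evalOn_surjective_of_card_le {d : ℕ} {Z : Finset (Projectivization κ (Fin 3 → κ))}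
    (h : Z.card ≤ d + 1) : Function.Surjective (evalOn d Z) := by
  by_contra hs
  obtain ⟨Y, hYZ, hY, hrel⟩ := exists_hasFullRelation hs
  have := hrel.add_two_le_card hY
  have := Finset.card_le_card hYZ
  lia

/-- The evaluation spaces in complementary degrees are orthogonal for the nondegenerate diagonal
form given by a relation with nonzero coefficients. -/
theorem HasFullRelation.hilbert_add_hilbert_le {i j : ℕ}
    {Z : Finset (Projectivization κ (Fin 3 → κ))} (h : HasFullRelation (i + j) Z) :
    hilbert i Z + hilbert j Z ≤ Z.card := by
  classical
  obtain ⟨c, hc, hrel⟩ := h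
  let B : (Z → κ) →ₗ[κ] (Z → κ) →ₗ[κ] κ :=
    LinearMap.mk₂ κ (fun v w ↦ ∑ p : Z, c p * v p * w p)
      (fun v v' w ↦ by simp [mul_add, add_mul, Finset.sum_add_distrib])
      (fun a v w ↦ by
        simp only [Pi.smul_apply, smul_eq_mul, Finset.mul_sum]
        exact Finset.sum_congr rfl fun p _ ↦ by ring)
      (fun v w w' ↦ by simp [mul_add, Finset.sum_add_distrib])
      (fun a v w ↦ by
        simp only [Pi.smul_apply, smul_eq_mul, Finset.mul_sum]
        exact Finset.sum_congr rfl fun p _ ↦ by ring)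
  have hB : Function.Injective B := by
    rw [injective_iff_map_eq_zero]
    intro v hv
    ext p
    have hp := LinearMap.congr_fun hv (Pi.single p 1)
    simpa [B, Pi.single_apply, hc p p.2] using hp
  have hle : (LinearMap.range (evalOn i Z)).map B ≤
      (LinearMap.range (evalOn j Z)).dualAnnihilator := by
    rintro _ ⟨_, ⟨f, rfl⟩, rfl⟩
    rw [Submodule.mem_dualAnnihilator]
    rintro _ ⟨g, rfl⟩
    rw [← hrel (f.1 * g.1) (f.2.mul g.2), ← Finset.sum_coe_sort Z]
    exact Finset.sum_congr rfl fun p _ ↦ by simp [mul_assoc]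
  have h1 := Submodule.finrank_mono hle
  rw [(Submodule.equivMapOfInjective B hB _).symm.finrank_eq] at h1
  have h2 := Subspace.finrank_add_finrank_dualAnnihilator_eq (LinearMap.range (evalOn j Z))
  rw [Module.finrank_fintype_fun_eq_card, Fintype.card_coe] at h2
  unfold hilbert
  lia

theorem HasFullRelation.onCurve_one {d : ℕ} {Z : Finset (Projectivization κ (Fin 3 → κ))}
    (h : HasFullRelation d Z) (hcard : Z.card ≤ 2 * d + 1) : OnCurve 1 Z := by
  induction d generalizing Z with
  | zero => exact onCurve_of_card_lt (hcard.trans_lt (by decide))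
  | succ d ih =>
    rcases le_or_gt Z.card 2 with hZ | hZ
    · exact onCurve_of_card_lt (hZ.trans_lt (by decide))
    obtain ⟨Y, hYZ, hY⟩ := Finset.exists_subset_card_eq hZ.le
    obtain ⟨L, hL0, hL, hLY⟩ : OnCurve 1 Y := onCurve_of_card_lt (hY.trans_lt (by decide))
    have hLc := card_off_add_card_le hYZ hLY
    rcases (off L Z).eq_empty_or_nonempty with hne | hne
    · exact ⟨L, hL0, hL, off_eq_empty.1 hne⟩
    obtain ⟨M, hM0, hM, hMv⟩ := ih (h.residual hL) (by lia)
    have hMc := card_off_add_card_le (off_subset L Z) hMv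
    have hLcard := (h.residual hL).add_two_le_card hne
    rcases (off M Z).eq_empty_or_nonempty with hne' | hne'
    · exact ⟨M, hM0, hM, off_eq_empty.1 hne'⟩
    have hMcard := (h.residual hM).add_two_le_card hne'
    lia

theorem two_mul_choose_two (m : ℕ) : 2 * ((m + 2).choose 2) = (m + 2) * (m + 1) := by
  rw [Nat.choose_two_right, Nat.mul_div_cancel']
  · rfl
  · exact (Nat.even_mul_pred_self (m + 2)).two_dvd

/-- Bézout's bound for an irreducible curve and a curve not containing it. -/
theorem card_le_mul_of_irreducible {e f : ℕ} {P F : MvPolynomial (Fin 3) κ}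
    (hirr : Irreducible P) (hP : P.IsHomogeneous e) (hF : F.IsHomogeneous f) (hPF : ¬ P ∣ F)
    {Z : Finset (Projectivization κ (Fin 3 → κ))} (hZP : ∀ p ∈ Z, eval p.rep P = 0)
    (hZF : ∀ p ∈ Z, eval p.rep F = 0) : Z.card ≤ e * f := by
  set n := Z.card with hn
  let S := fun m ↦ homogeneousSubmodule (Fin 3) κ m
  let Φ : (S (n + f) × S (n + e)) →ₗ[κ] MvPolynomial (Fin 3) κ :=
    (LinearMap.mulRight κ P ∘ₗ (S (n + f)).subtype).coprod
      (LinearMap.mulRight κ F ∘ₗ (S (n + e)).subtype)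
  let Ψ : S n →ₗ[κ] (S (n + f) × S (n + e)) :=
    ((LinearMap.mulRight κ F).restrict fun c hc ↦ IsHomogeneous.mul hc hF).prod
      (-(LinearMap.mulRight κ P).restrict fun c hc ↦ IsHomogeneous.mul hc hP)
  have hker : LinearMap.ker Φ ≤ LinearMap.range Ψ := by
    rintro ⟨a, b⟩ hab
    have hab' : a.1 * P + b.1 * F = 0 := hab
    have hdvd : P ∣ b.1 := by
      have : P ∣ b.1 * F := ⟨-a.1, by linear_combination hab'⟩
      exact (hirr.prime.dvd_or_dvd this).resolve_right hPF
    obtain ⟨c, hc⟩ := hdvd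
    have hc' : a.1 = -c * F := mul_right_cancel₀ hirr.ne_zero
      (by linear_combination hab' - F * hc)
    have hhom : c.IsHomogeneous n := by
      by_cases hb0 : b.1 = 0
      · have : c = 0 := by
          rw [hb0] at hc
          exact (mul_eq_zero.1 hc.symm).resolve_left hirr.ne_zero
        rw [this]; exact isHomogeneous_zero _ _ _
      · have hb := b.2
        have hbh : (P * c).IsHomogeneous (n + e) := hc ▸ hb
        obtain ⟨e', m, hP', hm, hem⟩ :=
          hbh.exists_isHomogeneous_of_mul (hc ▸ hb0)
        have := hP.inj_right hP' hirr.ne_zero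
        have hmn : m = n := by lia
        exact hmn ▸ hm
    refine ⟨⟨-c, hhom.neg⟩, Prod.ext (Subtype.ext ?_) (Subtype.ext ?_)⟩
    · exact hc'.symm
    · change -(-c * P) = b.1
      rw [hc]; ring
  have hrange : LinearMap.range Φ ≤ vanishingForms (n + e + f) Z := by
    rintro _ ⟨⟨a, b⟩, rfl⟩
    refine mem_vanishingForms.2 ⟨?_, fun p hp ↦ by simp [Φ, hZP p hp, hZF p hp]⟩
    refine IsHomogeneous.add ?_ (IsHomogeneous.mul b.2 hF)
    have := IsHomogeneous.mul a.2 hP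
    rwa [add_right_comm] at this
  have hkf := (Submodule.finrank_mono hker).trans (LinearMap.finrank_range_le Ψ)
  have hrf := Submodule.finrank_mono hrange
  have hrn := LinearMap.finrank_range_add_finrank_ker Φ
  have hh := hilbert_add_finrank_vanishingForms (n + e + f) Z
  rw [hilbert_eq_card (evalOn_surjective_of_card_le (by lia)), ← hn] at hh
  rw [Module.finrank_prod] at hrn
  simp only [S, finrank_homogeneousSubmodule_fin_three] at hkf hrn
  have c1 := two_mul_choose_two n
  have c2 := two_mul_choose_two (n + e)
  have c3 := two_mul_choose_two (n + f)
  have c4 := two_mul_choose_two (n + e + f)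
  zify at *
  nlinarith

/-- Points on a curve of degree `e` and in the base locus of a linear system of degree `d` without
fixed component. -/
theorem card_le_mul_of_onCurve {d : ℕ} {W : Submodule κ (MvPolynomial (Fin 3) κ)}
    (hW : W ≤ homogeneousSubmodule (Fin 3) κ d)
    (hgcd : ∀ g : MvPolynomial (Fin 3) κ, (∀ f ∈ W, f ≠ 0 → g ∣ f) → IsUnit g)
    {e : ℕ} {Z : Finset (Projectivization κ (Fin 3 → κ))} (hZ : OnCurve e Z)
    (hZW : ∀ p ∈ Z, ∀ f ∈ W, eval p.rep f = 0) : Z.card ≤ e * d := by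
  classical
  obtain ⟨F, h0, hF, hv⟩ := hZ
  induction F using WfDvdMonoid.induction_on_irreducible generalizing e Z with
  | zero => exact absurd rfl h0
  | unit u hu =>
    have : Z = ∅ := Finset.eq_empty_of_forall_notMem fun p hp ↦
      (hu.map (eval p.rep)).ne_zero (hv p hp)
    simp [this]
  | mul a i ha hi ih =>
    obtain ⟨x, y, hx, hy, rfl⟩ := hF.exists_isHomogeneous_of_mul h0
    have hex : ∃ f ∈ W, ¬ i ∣ f := by
      by_contra! hall
      exact hi.not_isUnit (hgcd i fun f hf _ ↦ hall f hf)
    obtain ⟨f, hfW, hif⟩ := hex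
    have h1 := card_le_mul_of_irreducible hi hx (hW hfW) hif
      (Z := Z.filter fun p ↦ eval p.rep i = 0) (by simp)
      (fun p hp ↦ hZW p (Finset.mem_of_mem_filter p hp) f hfW)
    have h2 := ih (e := y) (Z := off i Z) (fun p hp ↦ hZW p (off_subset i Z hp)) ha hy
      fun p hp ↦ by
        have := hv p (off_subset i Z hp)
        rw [map_mul, mul_eq_zero] at this
        exact this.resolve_left (mem_off.1 hp).2
    have h3 := Finset.card_filter_add_card_filter_not (s := Z) fun p ↦ eval p.rep i = 0
    have h4 : (off i Z).card = (Z.filter fun p ↦ ¬ eval p.rep i = 0).card := by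
      congr 1
    rw [add_mul]
    lia

theorem isUnit_of_isHomogeneous_zero {F : MvPolynomial (Fin 3) κ} (hF : F.IsHomogeneous 0)
    (h0 : F ≠ 0) : IsUnit F := by
  rw [totalDegree_eq_zero_iff_eq_C.1 ((totalDegree_zero_iff_isHomogeneous _).2 hF)] at h0 ⊢
  exact (IsUnit.mk0 _ fun h ↦ h0 (by rw [h, C_0])).map C

theorem irreducible_of_isHomogeneous_one {F : MvPolynomial (Fin 3) κ} (hF : F.IsHomogeneous 1)
    (h0 : F ≠ 0) : Irreducible F where
  not_isUnit h := by
    have := hF.totalDegree h0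
    rw [(isUnit_iff_totalDegree_of_isReduced.1 h).2] at this
    exact zero_ne_one this
  isUnit_or_isUnit a b hab := by
    subst hab
    obtain ⟨x, y, hx, hy, hxy⟩ := hF.exists_isHomogeneous_of_mul h0
    obtain rfl | rfl : x = 0 ∨ y = 0 := by lia
    · exact .inl (isUnit_of_isHomogeneous_zero hx (left_ne_zero_of_mul h0))
    · exact .inr (isUnit_of_isHomogeneous_zero hy (right_ne_zero_of_mul h0))

theorem OnCurve.succ {e : ℕ} {Z : Finset (Projectivization κ (Fin 3 → κ))} (h : OnCurve e Z) :
    OnCurve (e + 1) Z := by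
  obtain ⟨F, h0, hF, hv⟩ := h
  exact ⟨F * X 0, mul_ne_zero h0 (X_ne_zero 0), hF.mul (isHomogeneous_X κ 0),
    fun p hp ↦ by simp [hv p hp]⟩

theorem three_mul_le_hilbert {E : MvPolynomial (Fin 3) κ} (hirr : Irreducible E)
    (hE : E.IsHomogeneous 3) {Z : Finset (Projectivization κ (Fin 3 → κ))}
    (hZE : ∀ p ∈ Z, eval p.rep E = 0) {j : ℕ} (hj : 1 ≤ j) (hcard : 3 * j < Z.card) :
    3 * j ≤ hilbert j Z := by
  have hfactor : ∀ F ∈ vanishingForms j Z, F ≠ 0 →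
      ∃ m G, F = E * G ∧ G.IsHomogeneous m ∧ 3 + m = j := by
    intro F hF h0
    rw [mem_vanishingForms] at hF
    obtain ⟨G, rfl⟩ : E ∣ F := by
      by_contra hdvd
      exact hcard.not_ge (card_le_mul_of_irreducible hirr hE hF.1 hdvd hZE hF.2)
    obtain ⟨a, m, ha, hm, ham⟩ := hF.1.exists_isHomogeneous_of_mul h0
    obtain rfl := hE.inj_right ha hirr.ne_zero
    exact ⟨m, G, rfl, hm, ham⟩
  have hh := hilbert_add_finrank_vanishingForms j Z
  rcases lt_or_ge j 3 with hj3 | hj3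
  · have hbot : vanishingForms j Z = ⊥ := by
      rw [Submodule.eq_bot_iff]
      intro F hF
      by_contra h0
      obtain ⟨m, _, _, _, hm⟩ := hfactor F hF h0
      lia
    rw [hbot, finrank_bot] at hh
    interval_cases j <;> simp_all [Nat.choose]
  · obtain ⟨m, rfl⟩ := Nat.exists_eq_add_of_le hj3
    have hle : vanishingForms (3 + m) Z ≤
        (homogeneousSubmodule (Fin 3) κ m).map (LinearMap.mulLeft κ E) := by
      intro F hF
      by_cases h0 : F = 0
      · rw [h0]; exact zero_mem _
      obtain ⟨m', G, rfl, hG, hm⟩ := hfactor F hF h0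
      obtain rfl : m' = m := by lia
      exact ⟨G, hG, rfl⟩
    have hfr := (Submodule.finrank_mono hle).trans (Submodule.finrank_map_le _ _)
    rw [finrank_homogeneousSubmodule_fin_three] at hfr
    have c1 := two_mul_choose_two m
    have c2 := two_mul_choose_two (3 + m)
    nlinarith

/-- Fewer than `3 * d` points which support a relation in degree `d` lie on a conic. -/
theorem HasFullRelation.onCurve_two {d : ℕ} {Z : Finset (Projectivization κ (Fin 3 → κ))}
    (h : HasFullRelation d Z) (hcard : Z.card < 3 * d) : OnCurve 2 Z := by
  classical
  induction d using Nat.strong_induction_on generalizing Z with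
  | _ d ih =>
  by_contra hnot
  have hsix : 6 ≤ Z.card := by
    by_contra! hlt
    exact hnot (onCurve_of_card_lt (hlt.trans_le (by decide)))
  have hcard' : 2 * d + 2 ≤ Z.card := by
    by_contra! hlt
    exact hnot (h.onCurve_one (by lia)).succ
  have off_nonempty {F : MvPolynomial (Fin 3) κ} (h0 : F ≠ 0) (hF : F.IsHomogeneous 2) :
      (off F Z).Nonempty := by
    rw [Finset.nonempty_iff_ne_empty]
    exact fun hemp ↦ hnot ⟨F, h0, hF, off_eq_empty.1 hemp⟩
  have line_le : ∀ Y ⊆ Z, OnCurve 1 Y → Y.card ≤ 2 := by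
    rintro Y hYZ ⟨L, hL0, hL, hLY⟩
    by_contra! hY
    obtain ⟨k, rfl⟩ : ∃ k, d = k + 1 + 1 := ⟨d - 2, by lia⟩
    have hoffL := card_off_add_card_le hYZ hLY
    obtain ⟨Q, hQ0, hQ, hQv⟩ := ih (k + 1) (by lia) (h.residual hL) (by lia)
    have hQcard := (HasFullRelation.residual (k := k) h hQ).add_two_le_card (off_nonempty hQ0 hQ)
    have hoffQ := card_off_add_card_le (off_subset L Z) hQv
    exact hnot (OnCurve.mul_of_off hL0 hL ((h.residual hL).onCurve_one (by lia)))
  have relation_card {m : ℕ} {Y : Finset (Projectivization κ (Fin 3 → κ))} (hYZ : Y ⊆ Z)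
      (hY : Y.Nonempty) (hrel : HasFullRelation m Y) : 2 * m + 2 ≤ Y.card := by
    by_contra! hlt
    have h1 := line_le Y hYZ (hrel.onCurve_one (by lia))
    have h2 := hrel.add_two_le_card hY
    lia
  have conic_le : ∀ Y ⊆ Z, OnCurve 2 Y → Y.card ≤ 5 := by
    rintro Y hYZ ⟨Q, hQ0, hQ, hQY⟩
    by_contra! hY
    obtain ⟨k, rfl⟩ : ∃ k, d = k + 2 := ⟨d - 2, by lia⟩
    have hoffQ := card_off_add_card_le hYZ hQY
    obtain ⟨R, hR0, hR, hRv⟩ := ih k (by lia) (h.residual hQ) (by lia)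
    have hoffR := card_off_add_card_le (off_subset Q Z) hRv
    have h1 := relation_card (off_subset Q Z) (off_nonempty hQ0 hQ) (h.residual hQ)
    have h2 := relation_card (off_subset R Z) (off_nonempty hR0 hR) (h.residual hR)
    lia
  obtain ⟨k, rfl⟩ : ∃ k, d = k + 3 := ⟨d - 3, by lia⟩
  rcases k.eq_zero_or_pos with rfl | hk
  · obtain ⟨Y, hYZ, hY⟩ := Finset.exists_subset_card_eq (show 5 ≤ Z.card by lia)
    obtain ⟨Q, hQ0, hQ, hQY⟩ : OnCurve 2 Y := onCurve_of_card_lt (hY.trans_lt (by decide))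
    have hoffQ := card_off_add_card_le hYZ hQY
    have h1 := relation_card (off_subset Q Z) (off_nonempty hQ0 hQ)
      (HasFullRelation.residual (k := 1) h hQ)
    lia
  obtain ⟨Y, hYZ, hY⟩ := Finset.exists_subset_card_eq (show 9 ≤ Z.card by lia)
  obtain ⟨E, hE0, hE, hEY⟩ : OnCurve 3 Y := onCurve_of_card_lt (hY.trans_lt (by decide))
  have hEZ : ∀ p ∈ Z, eval p.rep E = 0 := by
    rw [← off_eq_empty]
    by_contra hne
    have hoffE := card_off_add_card_le hYZ hEY
    have h1 := relation_card (off_subset E Z) (Finset.nonempty_iff_ne_empty.2 hne) (h.residual hE)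
    have h2 := conic_le _ (off_subset E Z) (ih k (by lia) (h.residual hE) (by lia))
    lia
  have not_line_mul_conic {a b : MvPolynomial (Fin 3) κ} (hab : E = a * b)
      (ha : a.IsHomogeneous 1) (hb : b.IsHomogeneous 2) : False := by
    have ha0 : a ≠ 0 := by rintro rfl; simp [hab] at hE0
    have hb0 : b ≠ 0 := by rintro rfl; simp [hab] at hE0
    have h1 := line_le (Z.filter fun p ↦ eval p.rep a = 0) (Finset.filter_subset _ _)
      ⟨a, ha0, ha, by simp⟩
    have h2 := conic_le (off a Z) (off_subset a Z) ⟨b, hb0, hb, fun p hp ↦ by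
      have hp' := hEZ p (off_subset a Z hp)
      rw [hab, map_mul, mul_eq_zero] at hp'
      exact hp'.resolve_left (mem_off.1 hp).2⟩
    have h3 := Finset.card_filter_add_card_filter_not (s := Z) fun p ↦ eval p.rep a = 0
    have h4 : (off a Z).card = (Z.filter fun p ↦ ¬ eval p.rep a = 0).card := by
      congr 1
    lia
  have hirr : Irreducible E := by
    refine ⟨fun hu ↦ ?_, fun a b hab ↦ ?_⟩
    · obtain ⟨p, hp⟩ := Finset.card_pos.1 (show 0 < Z.card by lia)
      exact (hu.map (eval p.rep)).ne_zero (hEZ p hp)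
    · have hE' := hab ▸ hE
      have h0 := hab ▸ hE0
      obtain ⟨x, y, hx, hy, hxy⟩ := hE'.exists_isHomogeneous_of_mul h0
      obtain rfl | rfl | rfl | rfl : x = 0 ∨ x = 1 ∨ x = 2 ∨ x = 3 := by lia
      · exact .inl (isUnit_of_isHomogeneous_zero hx (left_ne_zero_of_mul h0))
      · obtain rfl : y = 2 := by lia
        exact (not_line_mul_conic hab hx hy).elim
      · obtain rfl : y = 1 := by lia
        exact (not_line_mul_conic (hab.trans (mul_comm a b)) hy hx).elim
      · obtain rfl : y = 0 := by lia
        exact .inr (isUnit_of_isHomogeneous_zero hy (right_ne_zero_of_mul h0))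
  obtain ⟨i, j, hi, hj, hij, hi', hj'⟩ : ∃ i j, 1 ≤ i ∧ 1 ≤ j ∧ k + 3 = i + j ∧
      3 * i < Z.card ∧ 3 * j < Z.card :=
    ⟨(k + 3) / 2, k + 3 - (k + 3) / 2, by lia, by lia, by lia, by lia, by lia⟩
  have h1 := three_mul_le_hilbert hirr hE hEZ hi hi'
  have h2 := three_mul_le_hilbert hirr hE hEZ hj hj'
  have h3 := HasFullRelation.hilbert_add_hilbert_le (hij ▸ h)
  lia

/-- Fewer than `3 * d` base points of a linear system of degree `d` without fixed component impose
independent conditions on forms of degree `d`. -/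
theorem evalOn_surjective_of_base_locus {d : ℕ} {W : Submodule κ (MvPolynomial (Fin 3) κ)}
    (hW : W ≤ homogeneousSubmodule (Fin 3) κ d)
    (hgcd : ∀ g : MvPolynomial (Fin 3) κ, (∀ f ∈ W, f ≠ 0 → g ∣ f) → IsUnit g)
    {Z : Finset (Projectivization κ (Fin 3 → κ))}
    (hZW : ∀ p ∈ Z, ∀ f ∈ W, eval p.rep f = 0) (hcard : Z.card < 3 * d) :
    Function.Surjective (evalOn d Z) := by
  by_contra hs
  obtain ⟨Y, hYZ, hY, hrel⟩ := exists_hasFullRelation hs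
  have hYW : ∀ p ∈ Y, ∀ f ∈ W, eval p.rep f = 0 := fun p hp ↦ hZW p (hYZ hp)
  have h0 := Finset.card_le_card hYZ
  have h1 := card_le_mul_of_onCurve hW hgcd (hrel.onCurve_two (by lia)) hYW
  have h2 := card_le_mul_of_onCurve hW hgcd (hrel.onCurve_one (by lia)) hYW
  have h3 := hrel.add_two_le_card hY
  lia

theorem ncard_projZeroLocus_le {d r : ℕ} {W : Submodule κ (MvPolynomial (Fin 3) κ)}
    (hW : W ≤ homogeneousSubmodule (Fin 3) κ d) (hr : Module.finrank κ W = r)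
    (hgcd : ∀ g : MvPolynomial (Fin 3) κ, (∀ f ∈ W, f ≠ 0 → g ∣ f) → IsUnit g)
    (h1 : (d + 2).choose 2 + 1 < 3 * d + r) (h2 : r ≤ (d + 2).choose 2) :
    (projZeroLocus κ W).ncard ≤ (d + 2).choose 2 - r := by
  by_contra! hlt
  have hfin := Set.finite_of_ncard_pos (Nat.zero_lt_of_lt hlt)
  rw [Set.ncard_eq_toFinset_card _ hfin] at hlt
  obtain ⟨Z, hZ, hZcard⟩ := Finset.exists_subset_card_eq (Nat.succ_le_of_lt hlt)
  have hZW : ∀ p ∈ Z, ∀ f ∈ W, eval p.rep f = 0 := fun p hp ↦ by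
    have := hZ hp
    rwa [Set.Finite.mem_toFinset] at this
  have hsurj := evalOn_surjective_of_base_locus hW hgcd hZW (by lia)
  have hh := hilbert_add_finrank_vanishingForms d Z
  rw [hilbert_eq_card hsurj] at hh
  have hle : W ≤ vanishingForms d Z := fun f hf ↦
    mem_vanishingForms.2 ⟨hW hf, fun p hp ↦ hZW p hp f hf⟩
  have := Submodule.finrank_mono hle
  lia

theorem finite_projZeroLocus {d : ℕ} {W : Submodule κ (MvPolynomial (Fin 3) κ)}
    (hW : W ≤ homogeneousSubmodule (Fin 3) κ d)
    (hgcd : ∀ g : MvPolynomial (Fin 3) κ, (∀ f ∈ W, f ≠ 0 → g ∣ f) → IsUnit g) :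
    (projZeroLocus κ W).Finite := by
  obtain ⟨F, hF, h0⟩ : ∃ F ∈ W, F ≠ 0 := by
    by_contra! h
    exact not_isUnit_zero (hgcd 0 fun f hf hne ↦ absurd (h f hf) hne)
  by_contra hinf
  obtain ⟨Z, hZ, hcard⟩ := Set.Infinite.exists_subset_card_eq hinf (d * d + 1)
  have := card_le_mul_of_onCurve hW hgcd ⟨F, h0, hW hF, fun p hp ↦ hZ hp F hF⟩
    fun p hp ↦ hZ hp
  lia

/-- The linear form `X i - a * X 2`. -/
noncomputable def gridLine (i : Fin 3) (a : κ) : MvPolynomial (Fin 3) κ := X i - C a * X 2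

theorem isHomogeneous_gridLine (i : Fin 3) (a : κ) : (gridLine i a).IsHomogeneous 1 :=
  (isHomogeneous_X κ i).sub (isHomogeneous_C_mul_X a 2)

theorem isRelPrime_gridLine (a b : κ) : IsRelPrime (gridLine 0 a) (gridLine 1 b) := by
  have h0 : gridLine (0 : Fin 3) a ≠ 0 := by
    intro h
    simpa [gridLine] using congrArg (eval ![a + 1, 0, 1]) h
  rw [(irreducible_of_isHomogeneous_one (isHomogeneous_gridLine 0 a) h0).isRelPrime_iff_not_dvd]
  rintro ⟨q, hq⟩
  simpa [gridLine] using congrArg (eval ![a, b + 1, 1]) hq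

/-- The forms of degree `d` through suitable `n` points of a `d × d` grid have no common factor. -/
theorem exists_card_eq_and_gcd [Infinite κ] {d n : ℕ} (hn : n ≤ d * d) :
    ∃ (Z : Finset (Projectivization κ (Fin 3 → κ))), Z.card = n ∧
      ∀ g : MvPolynomial (Fin 3) κ, (∀ f ∈ vanishingForms d Z, f ≠ 0 → g ∣ f) → IsUnit g := by
  classical
  let a := Infinite.natEmbedding κ
  have hv (x : ℕ × ℕ) : ![a x.1, a x.2, 1] ≠ 0 := fun h ↦ by simpa using congrFun h 2
  let pt : ℕ × ℕ → Projectivization κ (Fin 3 → κ) := fun x ↦ Projectivization.mk κ _ (hv x)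
  have hpt : Function.Injective pt := by
    intro x y hxy
    obtain ⟨t, ht⟩ := (Projectivization.mk_eq_mk_iff' κ _ _ (hv x) (hv y)).1 hxy
    have e0 := congrFun ht 0
    have e1 := congrFun ht 1
    have e2 := congrFun ht 2
    simp at e0 e1 e2
    simp only [e2, one_mul, EmbeddingLike.apply_eq_iff_eq] at e0 e1
    exact Prod.ext e0.symm e1.symm
  obtain ⟨Z, hZ, hcard⟩ := Finset.exists_subset_card_eq
    (s := (Finset.range d ×ˢ Finset.range d).map ⟨pt, hpt⟩) (n := n) (by simpa using hn)
  let F : Fin 3 → MvPolynomial (Fin 3) κ := fun i ↦ ∏ s ∈ Finset.range d, gridLine i (a s)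
  have hF (i : Fin 3) : (F i).IsHomogeneous d := by
    simpa using IsHomogeneous.prod (Finset.range d) (fun s ↦ gridLine i (a s)) (fun _ ↦ 1)
      fun s _ ↦ isHomogeneous_gridLine i (a s)
  have hFZ (i : Fin 3) (hi : i = 0 ∨ i = 1) : F i ∈ vanishingForms d Z := by
    refine mem_vanishingForms.2 ⟨hF i, fun p hp ↦ ?_⟩
    obtain ⟨x, hx, rfl⟩ := Finset.mem_map.1 (hZ hp)
    rw [Finset.mem_product] at hx
    obtain ⟨u, hu⟩ := Projectivization.exists_smul_eq_mk_rep κ _ (hv x)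
    change eval (Projectivization.mk κ _ (hv x)).rep (F i) = 0
    rw [← hu, map_prod]
    rcases hi with rfl | rfl
    · exact Finset.prod_eq_zero hx.1 (by simp [gridLine, Units.smul_def, mul_comm])
    · exact Finset.prod_eq_zero hx.2 (by simp [gridLine, Units.smul_def, mul_comm])
  have hrel : IsRelPrime (F 0) (F 1) :=
    IsRelPrime.prod_left fun s _ ↦ IsRelPrime.prod_right fun t _ ↦ isRelPrime_gridLine _ _
  refine ⟨Z, hcard, fun g hg ↦ hrel ?_ ?_⟩
  · by_cases h0 : F 0 = 0
    · rw [h0]; exact dvd_zero g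
    · exact hg _ (hFZ 0 (.inl rfl)) h0
  · by_cases h0 : F 1 = 0
    · rw [h0]; exact dvd_zero g
    · exact hg _ (hFZ 1 (.inr rfl)) h0

end PlaneForms

/-- Let `u_r(d,2)` be the maximum of `|V(W)|` over subspaces
`W ⊆ κ[x_0,x_1,x_2]_d` with `dim W = r` and `dim V(W) = 0` (equivalently
`gcd(W) = 1`). If `1 + C(d−1,2) < r ≤ C(d+2,2)`, then
`u_r(d,2) = C(d+2,2) − r`: this value is attained and is an upper bound. -/
theorem u_r_d_two_eq
    (κ : Type*) [Field κ] [IsAlgClosed κ] (d r : ℕ) (hd : 1 ≤ d)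
    (h1 : 1 + Nat.choose (d - 1) 2 < r) (h2 : r ≤ Nat.choose (d + 2) 2) :
    IsGreatest
      {n : ℕ | ∃ W : Submodule κ (MvPolynomial (Fin 3) κ),
        W ≤ MvPolynomial.homogeneousSubmodule (Fin 3) κ d ∧
        Module.finrank κ W = r ∧
        (∀ g : MvPolynomial (Fin 3) κ, (∀ f ∈ W, f ≠ 0 → g ∣ f) → IsUnit g) ∧
        n = (projZeroLocus κ W).ncard}
      (Nat.choose (d + 2) 2 - r) := by
  have hchoose : (d + 2).choose 2 = (d - 1).choose 2 + 3 * d := by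
    obtain ⟨m, rfl⟩ := Nat.exists_eq_add_of_le' hd
    simp only [Nat.add_sub_cancel, Nat.choose_succ_succ' _ 1, Nat.choose_one_right]
    ring
  have hlt : (d + 2).choose 2 + 1 < 3 * d + r := by lia
  refine ⟨?_, ?_⟩
  · have hn : (d + 2).choose 2 - r ≤ d * d := by
      obtain ⟨m, rfl⟩ := Nat.exists_eq_add_of_le' hd
      have : 3 * (m + 1) ≤ (m + 1) * (m + 1) + 2 := by nlinarith [sq_nonneg ((m : ℤ) - 1)]
      lia
    obtain ⟨Z, hcard, hgcd⟩ := PlaneForms.exists_card_eq_and_gcd (κ := κ) hn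
    have hW : PlaneForms.vanishingForms d Z ≤ homogeneousSubmodule (Fin 3) κ d :=
      fun f hf ↦ (PlaneForms.mem_vanishingForms.1 hf).1
    have hZW : ∀ p ∈ Z, ∀ f ∈ PlaneForms.vanishingForms d Z, eval p.rep f = 0 :=
      fun p hp f hf ↦ (PlaneForms.mem_vanishingForms.1 hf).2 p hp
    have hsurj := PlaneForms.evalOn_surjective_of_base_locus hW hgcd hZW (by lia)
    have hh := PlaneForms.hilbert_add_finrank_vanishingForms d Z
    rw [PlaneForms.hilbert_eq_card hsurj] at hh
    have hr : Module.finrank κ (PlaneForms.vanishingForms d Z) = r := by lia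
    refine ⟨_, hW, hr, hgcd, le_antisymm ?_
      (PlaneForms.ncard_projZeroLocus_le hW hr hgcd hlt h2)⟩
    rw [← hcard, ← Set.ncard_coe_finset]
    exact Set.ncard_le_ncard hZW (PlaneForms.finite_projZeroLocus hW hgcd)
  · rintro n ⟨W, hW, hr, hgcd, rfl⟩
    exact PlaneForms.ncard_projZeroLocus_le hW hr hgcd hlt h2
end
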